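/- Let η_1,…,η_d : [0,∞) → ℝ be continuous and for τ > 0 let g_τ(s,t) = (2s/τ)(τ−t) for s ≤ t and g_τ(s,t) = (2t/τ)(τ−s) for s ≥ t, and define b(τ) = (1/2) Σ_{μ=1}^d ∫_0^τ ∫_0^τ η_μ(s) g_τ(s,t) η_μ(t) ds dt. Then b is differentiable on (0,∞) and b'(τ) = (1/τ²) Σ_{μ=1}^d ( ∫_0^τ s η_μ(s) ds )². -/

import Mathlib

/-!
Write `F x = ∫₀ˣ f` and `M x = ∫₀ˣ t f(t) dt`. Splitting the inner integral at `t = s`, where the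
kernel `g_τ` changes form, the terms `s M(s) / τ` cancel and leave
`∫₀^τ f(s) g_τ(s,t) f(t) dt = 2 f(s) (M(s) - s F(s) + s (F(τ) - M(τ)/τ))`.
Integrating in `s`, the double integral becomes
`2 (∫₀^τ f M - ∫₀^τ s f F + M(τ) F(τ) - M(τ)²/τ)`, in which `τ` only occurs as an endpoint or
algebraically. The fundamental theorem of calculus applies to each piece; everything cancels
except `2 M(τ)²/τ²`. Sources that are continuous only on `[0,∞)` are first replaced by
their continuous extensions `s ↦ η (max s 0)`, which does not change the integrals for `τ > 0`.
-/

open intervalIntegral in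
lemma inner_green_integral (f : ℝ → ℝ) (hf : Continuous f) (τ s : ℝ) (hτ : 0 < τ)
    (hs : 0 ≤ s) (hsτ : s ≤ τ) :
    ∫ t in (0:ℝ)..τ, f s * (if s ≤ t then 2 * s / τ * (τ - t) else 2 * t / τ * (τ - s)) * f t
      = 2 * (f s * (∫ t in (0:ℝ)..s, t * f t) - s * f s * (∫ t in (0:ℝ)..s, f t)
        + ((∫ t in (0:ℝ)..τ, f t) - (∫ t in (0:ℝ)..τ, t * f t) / τ) * (s * f s)) := by
  have hc : Continuous fun t => f s *
      (if s ≤ t then 2 * s / τ * (τ - t) else 2 * t / τ * (τ - s)) * f t := by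
    have : ∀ t, (if s ≤ t then 2 * s / τ * (τ - t) else 2 * t / τ * (τ - s))
        = 2 * min s t / τ * (τ - max s t) := by
      intro t
      split_ifs with h
      · rw [min_eq_left h, max_eq_right h]
      · rw [min_eq_right (le_of_not_ge h), max_eq_left (le_of_not_ge h)]
    simp only [this]
    fun_prop
  have hM : Continuous fun t => t * f t := by fun_prop
  rw [← integral_add_adjacent_intervals (hc.intervalIntegrable 0 s) (hc.intervalIntegrable s τ)]
  have h1 : ∫ t in (0:ℝ)..s, f s *
      (if s ≤ t then 2 * s / τ * (τ - t) else 2 * t / τ * (τ - s)) * f t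
      = (2 * f s * (τ - s) / τ) * ∫ t in (0:ℝ)..s, t * f t := by
    rw [← integral_const_mul]
    refine integral_congr fun t ht => ?_
    rw [Set.uIcc_of_le hs] at ht
    split_ifs with h
    · rw [le_antisymm h ht.2]
      ring
    · ring
  have h2 : ∫ t in s..τ, f s *
      (if s ≤ t then 2 * s / τ * (τ - t) else 2 * t / τ * (τ - s)) * f t
      = 2 * s * f s * (∫ t in s..τ, f t) - (2 * s * f s / τ) * ∫ t in s..τ, t * f t := by
    rw [← integral_const_mul, ← integral_const_mul, ← integral_sub]
    · refine integral_congr fun t ht => ?_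
      rw [Set.uIcc_of_le hsτ] at ht
      rw [if_pos ht.1]
      field_simp
    · exact (hf.const_mul _).intervalIntegrable _ _
    · exact (hM.const_mul _).intervalIntegrable _ _
  rw [h1, h2, ← integral_interval_sub_left (hf.intervalIntegrable 0 τ) (hf.intervalIntegrable 0 s),
    ← integral_interval_sub_left (hM.intervalIntegrable 0 τ) (hM.intervalIntegrable 0 s)]
  field_simp
  ring

open intervalIntegral in
lemma double_green_integral (f : ℝ → ℝ) (hf : Continuous f) (τ : ℝ) (hτ : 0 < τ) :
    ∫ s in (0:ℝ)..τ, ∫ t in (0:ℝ)..τ,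
        f s * (if s ≤ t then 2 * s / τ * (τ - t) else 2 * t / τ * (τ - s)) * f t
      = 2 * ((∫ s in (0:ℝ)..τ, f s * ∫ t in (0:ℝ)..s, t * f t)
        - (∫ s in (0:ℝ)..τ, s * f s * ∫ t in (0:ℝ)..s, f t)
        + ((∫ t in (0:ℝ)..τ, f t) - (∫ t in (0:ℝ)..τ, t * f t) / τ)
          * ∫ t in (0:ℝ)..τ, t * f t) := by
  have hM : Continuous fun t => t * f t := by fun_prop
  have hF' : Continuous fun s => ∫ t in (0:ℝ)..s, f t :=
    continuous_primitive (fun a b => hf.intervalIntegrable a b) 0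
  have hM' : Continuous fun s => ∫ t in (0:ℝ)..s, t * f t :=
    continuous_primitive (fun a b => hM.intervalIntegrable a b) 0
  have hA : Continuous fun s => f s * ∫ t in (0:ℝ)..s, t * f t := hf.mul hM'
  have hB : Continuous fun s => s * f s * ∫ t in (0:ℝ)..s, f t := hM.mul hF'
  rw [integral_congr (g := fun s => 2 * (f s * (∫ t in (0:ℝ)..s, t * f t)
        - s * f s * (∫ t in (0:ℝ)..s, f t)
        + ((∫ t in (0:ℝ)..τ, f t) - (∫ t in (0:ℝ)..τ, t * f t) / τ) * (s * f s)))]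
  · rw [integral_const_mul, integral_add, integral_sub, integral_const_mul]
    · exact hA.intervalIntegrable _ _
    · exact hB.intervalIntegrable _ _
    · exact (hA.sub hB).intervalIntegrable _ _
    · exact (hM.const_mul _).intervalIntegrable _ _
  · intro s hs
    rw [Set.uIcc_of_le hτ.le] at hs
    exact inner_green_integral f hf τ s hτ hs.1 hs.2

open intervalIntegral in
lemma hasDerivAt_double_green_integral (f : ℝ → ℝ) (hf : Continuous f) (τ : ℝ) (hτ : 0 < τ) :
    HasDerivAt (fun τ => ∫ s in (0:ℝ)..τ, ∫ t in (0:ℝ)..τ,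
        f s * (if s ≤ t then 2 * s / τ * (τ - t) else 2 * t / τ * (τ - s)) * f t)
      (2 / τ ^ 2 * (∫ s in (0:ℝ)..τ, s * f s) ^ 2) τ := by
  have hM : Continuous fun t => t * f t := by fun_prop
  have hF' : Continuous fun s => ∫ t in (0:ℝ)..s, f t :=
    continuous_primitive (fun a b => hf.intervalIntegrable a b) 0
  have hM' : Continuous fun s => ∫ t in (0:ℝ)..s, t * f t :=
    continuous_primitive (fun a b => hM.intervalIntegrable a b) 0
  have dF := (hf.integral_hasStrictDerivAt 0 τ).hasDerivAt
  have dM := (hM.integral_hasStrictDerivAt 0 τ).hasDerivAt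
  have dA := ((hf.mul hM').integral_hasStrictDerivAt 0 τ).hasDerivAt
  have dB := ((hM.mul hF').integral_hasStrictDerivAt 0 τ).hasDerivAt
  have key := ((dA.sub dB).add
    ((dF.sub (dM.div (hasDerivAt_id τ) hτ.ne')).mul dM)).const_mul 2
  refine (key.congr_deriv ?_).congr_of_eventuallyEq ?_
  · simp only [id, Pi.sub_apply, Pi.div_apply, Pi.mul_apply]
    field_simp
    ring
  · filter_upwards [lt_mem_nhds hτ] with x hx
    exact double_green_integral f hf x hx

theorem deriv_of_source_functional
    (d : ℕ) (hd : 0 < d)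
    (η : Fin d → ℝ → ℝ) (hη : ∀ μ, ContinuousOn (η μ) (Set.Ici 0))
    (g : ℝ → ℝ → ℝ → ℝ)
    (hg : ∀ τ s t, g τ s t =
      if s ≤ t then 2 * s / τ * (τ - t) else 2 * t / τ * (τ - s))
    (b : ℝ → ℝ)
    (hb : ∀ τ, b τ = (1/2) * ∑ μ,
      ∫ s in (0:ℝ)..τ, ∫ t in (0:ℝ)..τ, η μ s * g τ s t * η μ t) :
    ∀ τ : ℝ, 0 < τ →
      HasDerivAt b ((1 / τ^2) * ∑ μ, (∫ s in (0:ℝ)..τ, s * η μ s)^2) τ := by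
  intro τ hτ
  -- The continuous extension of `η μ` that is constant on `(-∞, 0]`.
  let f : Fin d → ℝ → ℝ := fun μ s => η μ (max s 0)
  have hf : ∀ μ, Continuous (f μ) := fun μ =>
    (hη μ).comp_continuous (by fun_prop) fun s => le_max_right s 0
  have hfη : ∀ μ s, 0 ≤ s → f μ s = η μ s := fun μ s hs => by simp only [f, max_eq_left hs]
  have key := (HasDerivAt.fun_sum (u := Finset.univ) fun μ _ =>
    hasDerivAt_double_green_integral (f μ) (hf μ) τ hτ).const_mul (1 / 2 : ℝ)
  refine (key.congr_deriv ?_).congr_of_eventuallyEq ?_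
  · rw [← Finset.mul_sum, ← mul_assoc]
    congr 1
    · ring
    · refine Finset.sum_congr rfl fun μ _ => ?_
      congr 1
      refine intervalIntegral.integral_congr fun s hs => ?_
      rw [Set.uIcc_of_le hτ.le] at hs
      rw [hfη μ s hs.1]
  · filter_upwards [lt_mem_nhds hτ] with x hx
    rw [hb]
    congr 1
    refine Finset.sum_congr rfl fun μ _ => ?_
    refine intervalIntegral.integral_congr fun s hs => ?_
    refine intervalIntegral.integral_congr fun t ht => ?_
    rw [Set.uIcc_of_le hx.le] at hs ht
    rw [hfη μ s hs.1, hfη μ t ht.1, hg]
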